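/- For any real α ≥ 1/2, if φ(n) = e^{n^α}, then the Hausdorff dimension of E(φ) equals 1/2. -/

import Mathlib

/-!
Write `φ(n) = exp (n ^ α)` and `a₁, a₂, …` for the partial quotients.

*Upper bound.* If `S_n ~ φ(n)`, then, because `α ≥ 1/2`, the sum `S` grows by at least `r exp (D r / 2)`
over each of the `D² r` disjoint windows of length `r` between `N` and `2N`, where `N = (D r)²` and
`r` is large. Hence some product `aᵢ aᵢ₊₁` in each window is at least `exp (D r / 2)`, and multiplying
over the windows gives `(a₁ ⋯ a_{2N+1})² ≥ exp (D N / 2)` for every `D` (`exp_le_prod`). A cylinder of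
rank `n` has diameter at most `∏ aᵢ⁻²` (`abs_sub_le_of_pq_eq`), so for `s > 1/2` the cylinders of rank
`n = 2N + 1` meeting the set have total cost at most `exp (-c D n) (∑ k^(-(s + 1/2)))^n` with
`c > 0` depending only on `s`, which tends to `0` once `D` is large
(`exists_hausdorff_fastSet_eq_zero`).

*Lower bound.* Let `b₀ = 1` and `bₘ bₘ₊₁ = φ(m+1) - φ(m)`. If `aₘ₊₁ ~ bₘ`, then `S_n ~ φ(n)` by
summation (`cfVal_mem_Ephi`). The increments of `φ` grow fast enough for `bₘ` to be at least a multiple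
of `m + 1` (`exists_base_ge`); in particular `bₘ → ∞`, so `aₘ₊₁` may be chosen freely in a block of
length about `bₘ^(1-ε)` just above `bₘ`. Reading the position of each digit in its block as a mixed
radix digit sends the resulting Cantor set onto `[0, 1)`, and this map is `s`-Hölder for each
`s < 1/2` when `ε` is small (`le_dimH_of_blocks`), because `log bₙ` is negligible against
`∑_{i<n} log bᵢ` (`negligible`). So the dimension is at least `s`.
-/


open MeasureTheory Filter Real Set

/-- The Gauss map `T(x) = 1/x - ⌊1/x⌋`, with `T(0) = 0`. -/
noncomputable def gaussMap (x : ℝ) : ℝ := if x = 0 then 0 else 1 / x - ⌊1 / x⌋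

/-- The `n`-th partial quotient `a_n(x) = ⌊1 / T^{n-1}(x)⌋` (for `n ≥ 1`). -/
noncomputable def pq (n : ℕ) (x : ℝ) : ℕ := ⌊1 / (gaussMap^[n - 1] x)⌋₊

/-- `S_n(x) = ∑_{i=1}^n a_i(x) a_{i+1}(x)`. -/
noncomputable def S (n : ℕ) (x : ℝ) : ℕ := ∑ i ∈ Finset.Icc 1 n, pq i x * pq (i + 1) x

/-- The level set `E(φ)` of points whose sums `S_n` grow like `φ(n)`. -/
def Ephi (φ : ℕ → ℝ) : Set ℝ :=
  {x : ℝ | x ∈ Set.Ioo (0:ℝ) 1 ∧ Irrational x ∧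
    Tendsto (fun n : ℕ => (S n x : ℝ) / φ n) atTop (nhds 1)}

open scoped ENNReal NNReal

/-! ### Partial quotients and cylinders -/

/-- The irrational numbers of `(0, 1)`. -/
def unitIrr : Set ℝ := {x | x ∈ Set.Ioo (0:ℝ) 1 ∧ Irrational x}

lemma pq_add_two (i : ℕ) (x : ℝ) : pq (i + 2) x = pq (i + 1) (gaussMap x) := by
  simp [pq, Function.iterate_succ_apply]

lemma gaussMap_mem {x : ℝ} (hx : x ∈ unitIrr) : gaussMap x ∈ unitIrr := by
  obtain ⟨⟨h0, h1⟩, hi⟩ := hx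
  have hir : Irrational (gaussMap x) := by
    rw [gaussMap, if_neg h0.ne']
    have : Irrational (1 / x) := by simpa using hi.inv
    exact this.sub_intCast _
  have h2 : gaussMap x = Int.fract (1 / x) := by
    rw [gaussMap, if_neg h0.ne', Int.fract]
  refine ⟨⟨?_, ?_⟩, hir⟩
  · refine lt_of_le_of_ne ?_ hir.ne_zero.symm
    rw [h2]; exact Int.fract_nonneg _
  · rw [h2]; exact Int.fract_lt_one _

lemma mul_pq_one {x : ℝ} (hx : x ∈ unitIrr) : x * (pq 1 x + gaussMap x) = 1 := by
  obtain ⟨⟨h0, h1⟩, hi⟩ := hx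
  have : ((pq 1 x : ℕ) : ℝ) = (⌊1 / x⌋ : ℝ) := by
    simp only [pq, Nat.sub_self, Function.iterate_zero, id]
    exact natCast_floor_eq_intCast_floor (by positivity)
  rw [this, gaussMap, if_neg h0.ne']
  field_simp
  ring

lemma one_le_pq_one {x : ℝ} (hx : x ∈ unitIrr) : 1 ≤ pq 1 x := by
  obtain ⟨⟨h0, h1⟩, hi⟩ := hx
  simp only [pq, Nat.sub_self, Function.iterate_zero, id]
  rw [Nat.one_le_floor_iff, le_div_iff₀ h0]
  linarith

lemma one_le_pq (i : ℕ) : ∀ {x : ℝ}, x ∈ unitIrr → 1 ≤ pq (i + 1) x := by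
  induction i with
  | zero => exact fun hx => one_le_pq_one hx
  | succ i ih => exact fun hx => by rw [pq_add_two]; exact ih (gaussMap_mem hx)

/-- Two points of the same rank-`n` cylinder are at distance at most `∏ aᵢ⁻²`: each inverse branch
`t ↦ 1 / (a + t)` satisfies `|x - y| = x y |x' - y'| ≤ a⁻² |x' - y'|`. -/
lemma abs_sub_le_of_pq_eq (n : ℕ) : ∀ {x y : ℝ}, x ∈ unitIrr → y ∈ unitIrr →
    (∀ i < n, pq (i + 1) x = pq (i + 1) y) →
    |x - y| ≤ ∏ i ∈ Finset.range n, (((pq (i + 1) x : ℕ) : ℝ) ^ 2)⁻¹ := by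
  induction n with
  | zero =>
    intro x y hx hy _
    obtain ⟨⟨h0, h1⟩, -⟩ := hx
    obtain ⟨⟨h2, h3⟩, -⟩ := hy
    simp only [Finset.range_zero, Finset.prod_empty, abs_le]
    constructor <;> linarith
  | succ n ih =>
    intro x y hx hy h
    have key := ih (gaussMap_mem hx) (gaussMap_mem hy) (fun i hi => by
      have := h (i + 1) (by omega)
      rwa [pq_add_two, pq_add_two] at this)
    have h1 : pq 1 x = pq 1 y := h 0 (by omega)
    have ex := mul_pq_one hx
    have ey := mul_pq_one hy
    have p1 : (1 : ℝ) ≤ pq 1 x := by exact_mod_cast one_le_pq_one hx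
    rw [← h1] at ey
    have px := hx.1.1
    have py := hy.1.1
    have gx := (gaussMap_mem hx).1.1
    have gy := (gaussMap_mem hy).1.1
    rw [Finset.prod_range_succ']
    simp only [zero_add, show ∀ k, k + 1 + 1 = k + 2 from fun _ => rfl, pq_add_two]
    set a : ℝ := (pq 1 x : ℝ)
    have e : x - y = x * y * (gaussMap y - gaussMap x) := by
      linear_combination y * ex - x * ey
    have bx : x ≤ a⁻¹ := by
      rw [le_inv_comm₀ px (by linarith), ← one_div, le_div_iff₀ px]
      nlinarith
    have byy : y ≤ a⁻¹ := by
      rw [le_inv_comm₀ py (by linarith), ← one_div, le_div_iff₀ py]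
      nlinarith
    rw [e, abs_mul, abs_of_pos (mul_pos px py), abs_sub_comm, mul_comm]
    have : x * y ≤ (a ^ 2)⁻¹ := by
      rw [← inv_pow, sq]
      exact mul_le_mul bx byy py.le (by positivity)
    exact mul_le_mul key this (by positivity) ((abs_nonneg _).trans key)

/-! ### Growth of the products of partial quotients -/

lemma sqrt_sub_sqrt_le_rpow_sub_rpow {α : ℝ} (hα : 1 / 2 ≤ α) {a b : ℝ} (ha : 1 ≤ a) (hab : a ≤ b) :
    √b - √a ≤ b ^ α - a ^ α := by
  have h : ∀ z : ℝ, 1 ≤ z → z ^ α = √z * z ^ (α - 1 / 2) := fun z hz => by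
    rw [Real.sqrt_eq_rpow, ← Real.rpow_add (by linarith)]; ring_nf
  rw [h a ha, h b (ha.trans hab)]
  have h1 : 1 ≤ a ^ (α - 1 / 2) := Real.one_le_rpow ha (by linarith)
  have h2 : a ^ (α - 1 / 2) ≤ b ^ (α - 1 / 2) :=
    Real.rpow_le_rpow (by linarith) hab (by linarith)
  have h3 : √a ≤ √b := Real.sqrt_le_sqrt hab
  have h4 : 0 ≤ √a := Real.sqrt_nonneg _
  nlinarith

lemma sub_div_le_sqrt_sub {a b : ℝ} (ha : 0 ≤ a) (hb : 0 < b) (hab : a ≤ b) :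
    (b - a) / (2 * √b) ≤ √b - √a := by
  have h3 : √a ≤ √b := Real.sqrt_le_sqrt hab
  have h5 : 0 < √b := Real.sqrt_pos.2 hb
  rw [div_le_iff₀ (by positivity)]
  nlinarith [Real.sq_sqrt ha, Real.sq_sqrt hb.le]

lemma S_add (x : ℝ) (a h : ℕ) :
    S (a + h) x = S a x + ∑ i ∈ Finset.Ioc a (a + h), pq i x * pq (i + 1) x := by
  unfold S
  rw [← Finset.sum_union]
  · congr 1; ext i; simp only [Finset.mem_Icc, Finset.mem_union, Finset.mem_Ioc]; omega
  · rw [Finset.disjoint_left]; intro i; simp only [Finset.mem_Icc, Finset.mem_Ioc]; omega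

lemma one_le_prod_real {s : Finset ℕ} {f : ℕ → ℝ} (h : ∀ i ∈ s, 1 ≤ f i) : 1 ≤ ∏ i ∈ s, f i := by
  rw [← Finset.prod_const_one (s := s)]
  exact Finset.prod_le_prod (fun _ _ => zero_le_one) h

/-- If the products `aᵢ aᵢ₊₁` sum to at least `h Q` over a window of length `h`, then one of them is
at least `Q`, hence so is their product. -/
lemma le_prod_window {x : ℝ} (hx : x ∈ unitIrr) {a h : ℕ} {Q : ℝ} (hh : 1 ≤ h)
    (hS : h * Q ≤ (S (a + h) x : ℝ) - S a x) :
    Q ≤ ∏ i ∈ Finset.Ioc a (a + h), ((pq i x : ℝ) * pq (i + 1) x) := by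
  have hpos : ∀ i ∈ Finset.Ioc a (a + h), (1 : ℝ) ≤ (pq i x : ℝ) * pq (i + 1) x := by
    intro i hi
    rw [Finset.mem_Ioc] at hi
    obtain ⟨j, rfl⟩ : ∃ j, i = j + 1 := ⟨i - 1, by omega⟩
    exact_mod_cast Nat.mul_le_mul (one_le_pq j hx) (one_le_pq (j + 1) hx)
  by_contra! hlt
  have h1 : ∀ i ∈ Finset.Ioc a (a + h), (pq i x : ℝ) * pq (i + 1) x < Q := by
    intro i hi
    refine lt_of_le_of_lt ?_ hlt
    rw [← Finset.mul_prod_erase _ _ hi]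
    refine le_mul_of_one_le_right (zero_le_one.trans (hpos i hi)) ?_
    exact one_le_prod_real fun j hj => hpos j (Finset.mem_of_mem_erase hj)
  have h2 : ∑ i ∈ Finset.Ioc a (a + h), (pq i x : ℝ) * pq (i + 1) x
      < ∑ i ∈ Finset.Ioc a (a + h), Q :=
    Finset.sum_lt_sum_of_nonempty ⟨a + 1, by simp; omega⟩ h1
  rw [Finset.sum_const, Nat.card_Ioc, nsmul_eq_mul] at h2
  rw [S_add] at hS
  push_cast at hS
  simp only [add_tsub_cancel_left] at h2
  linarith

lemma prod_windows {x : ℝ} (hx : x ∈ unitIrr) {N h : ℕ} {Q : ℝ} (hQ : 0 ≤ Q) (hh : 1 ≤ h) (m : ℕ)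
    (hS : ∀ j < m, h * Q ≤ (S (N + j * h + h) x : ℝ) - S (N + j * h) x) :
    Q ^ m ≤ ∏ i ∈ Finset.Ioc N (N + m * h), ((pq i x : ℝ) * pq (i + 1) x) := by
  induction m with
  | zero => simp
  | succ m ih =>
    have h1 := ih (fun j hj => hS j (by omega))
    have h2 := le_prod_window hx hh (hS m (by omega))
    have e : Finset.Ioc N (N + (m + 1) * h)
        = Finset.Ioc N (N + m * h) ∪ Finset.Ioc (N + m * h) (N + m * h + h) := by
      rw [Finset.Ioc_union_Ioc_eq_Ioc (by omega) (by omega)]; congr 1; ring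
    rw [e, Finset.prod_union (Finset.disjoint_left.2 (fun i => by
      simp only [Finset.mem_Ioc]; omega)), pow_succ]
    exact mul_le_mul h1 h2 hQ ((pow_nonneg hQ _).trans h1)

lemma prod_Ioc_le {x : ℝ} (hx : x ∈ unitIrr) (N M : ℕ) :
    ∏ i ∈ Finset.Ioc N M, ((pq i x : ℝ) * pq (i + 1) x)
      ≤ (∏ i ∈ Finset.range (M + 1), (pq (i + 1) x : ℝ)) ^ 2 := by
  have h1 : ∀ i, (1 : ℝ) ≤ pq (i + 1) x := fun i => by exact_mod_cast one_le_pq i hx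
  rw [Finset.prod_mul_distrib, sq]
  have aux : ∀ s t : Finset ℕ, s ⊆ t →
      ∏ i ∈ s, (pq (i + 1) x : ℝ) ≤ ∏ i ∈ t, (pq (i + 1) x : ℝ) := fun s t hst => by
    rw [← Finset.prod_sdiff hst]
    exact le_mul_of_one_le_left (Finset.prod_nonneg fun i _ => by positivity)
      (one_le_prod_real fun j _ => h1 j)
  have e : ∏ i ∈ Finset.Ioc N M, (pq i x : ℝ) = ∏ i ∈ Finset.Ico N M, (pq (i + 1) x : ℝ) := by
    rw [Finset.prod_Ico_add' (fun i => (pq i x : ℝ)) N M 1]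
    congr 1
    ext i; simp only [Finset.mem_Ioc, Finset.mem_Ico]; omega
  rw [e]
  refine mul_le_mul (aux _ _ ?_) (aux _ _ ?_) (Finset.prod_nonneg fun i _ => by positivity)
    (Finset.prod_nonneg fun i _ => by positivity)
  · intro i; simp only [Finset.mem_Ico, Finset.mem_range]; omega
  · intro i; simp only [Finset.mem_Ioc, Finset.mem_range]; omega

/-- For `x ∈ E(φ)` the geometric means of the partial quotients are unbounded. Between `N` and `2N`,
with `N = (D r)²`, there are `D² r` windows of length `r`; over each of them `n ^ α` grows by a
constant depending on `D`, so `S` grows by a fixed proportion of `φ(N) ≥ exp (D r)`. -/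
lemma exp_le_prod {α : ℝ} (hα : 1 / 2 ≤ α) {x : ℝ}
    (hx : x ∈ Ephi (fun n : ℕ => Real.exp ((n : ℝ) ^ α))) {D : ℕ} (hD : 1 ≤ D) :
    ∀ᶠ r : ℕ in atTop, Real.exp (D * ((D * r) ^ 2 : ℕ) / 2)
      ≤ (∏ i ∈ Finset.range (2 * (D * r) ^ 2 + 1), (pq (i + 1) x : ℝ)) ^ 2 := by
  have hxu : x ∈ unitIrr := ⟨hx.1, hx.2.1⟩
  have hlim := hx.2.2
  have hD' : (1 : ℝ) ≤ D := by exact_mod_cast hD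
  set ε : ℝ := 1 / (12 * D) with hε
  have hε0 : 0 < ε := by positivity
  have h1 : ∀ᶠ n : ℕ in atTop, (1 - ε) * Real.exp ((n : ℝ) ^ α) ≤ S n x ∧
      (S n x : ℝ) ≤ (1 + ε) * Real.exp ((n : ℝ) ^ α) := by
    have := hlim.eventually (Icc_mem_nhds (show 1 - ε < 1 by linarith) (show 1 < 1 + ε by linarith))
    filter_upwards [this] with n hn
    rw [le_div_iff₀ (Real.exp_pos _), div_le_iff₀ (Real.exp_pos _)] at hn
    exact hn
  obtain ⟨N0, hN0⟩ := eventually_atTop.1 h1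
  have h2 : ∀ᶠ z : ℝ in atTop, 12 * z ≤ Real.exp (z / 2) := by
    have := (Real.tendsto_exp_div_pow_atTop 1).comp
      (tendsto_id.atTop_div_const (show (0 : ℝ) < 2 by norm_num))
    filter_upwards [this.eventually_ge_atTop 24, eventually_gt_atTop 0] with z hz hz0
    simp only [Function.comp, id, pow_one] at hz
    rw [le_div_iff₀ (by positivity)] at hz
    linarith
  have h3 : Tendsto (fun r : ℕ => (D : ℝ) * r) atTop atTop :=
    tendsto_natCast_atTop_atTop.const_mul_atTop (by linarith)
  filter_upwards [h3.eventually h2, eventually_ge_atTop 1, eventually_ge_atTop N0] with r hr hr1 hrN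
  have hr1' : (1 : ℝ) ≤ r := by exact_mod_cast hr1
  set N : ℕ := (D * r) ^ 2 with hN
  have hNr : r ≤ N := by
    calc r ≤ D * r := Nat.le_mul_of_pos_left r hD
      _ ≤ N := Nat.le_self_pow two_ne_zero _
  have hwin : ∀ j < D ^ 2 * r, (r : ℝ) * Real.exp (D * r / 2)
      ≤ (S (N + j * r + r) x : ℝ) - S (N + j * r) x := by
    intro j hj
    have hle : N + j * r + r ≤ 2 * N := by
      have : (j + 1) * r ≤ D ^ 2 * r * r := Nat.mul_le_mul_right r hj
      have e : N = D ^ 2 * r * r := by rw [hN]; ring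
      nlinarith
    set a : ℕ := N + j * r with ha
    have haN : N ≤ a := Nat.le_add_right _ _
    obtain ⟨-, hSa⟩ := hN0 a (by omega)
    obtain ⟨hSb, -⟩ := hN0 (a + r) (by omega)
    have sN : √(N : ℝ) = D * r := by
      rw [hN]; push_cast; exact Real.sqrt_sq (by positivity)
    have hNa : (N : ℝ) ≤ a := by exact_mod_cast haN
    have hN1 : (1 : ℝ) ≤ N := by exact_mod_cast (hr1.trans hNr)
    have hb2 : ((a + r : ℕ) : ℝ) ≤ 2 * N := by exact_mod_cast hle
    have hab : (a : ℝ) ≤ ((a + r : ℕ) : ℝ) := by push_cast; linarith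
    have ha1 : (1 : ℝ) ≤ a := hN1.trans hNa
    -- the exponent grows by at least `1 / (3 D)` over the window
    have g1 : 1 / (3 * (D : ℝ)) ≤ ((a + r : ℕ) : ℝ) ^ α - (a : ℝ) ^ α := by
      refine le_trans ?_ (sqrt_sub_sqrt_le_rpow_sub_rpow hα ha1 hab)
      refine le_trans ?_ (sub_div_le_sqrt_sub (by linarith) (by linarith) hab)
      have : √((a + r : ℕ) : ℝ) ≤ 3 / 2 * (D * r) := by
        rw [← sN]
        rw [Real.sqrt_le_left (by positivity), mul_pow, Real.sq_sqrt (by positivity)]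
        linarith
      have hpos : 0 < √((a + r : ℕ) : ℝ) := Real.sqrt_pos.2 (by linarith)
      rw [div_le_div_iff₀ (by positivity) (by positivity)]
      push_cast at this ⊢
      nlinarith
    have g2 : Real.exp (D * r) ≤ Real.exp ((a : ℝ) ^ α) := by
      rw [Real.exp_le_exp, ← sN, Real.sqrt_eq_rpow]
      calc (N : ℝ) ^ (1 / 2 : ℝ) ≤ (a : ℝ) ^ (1 / 2 : ℝ) :=
            Real.rpow_le_rpow (by positivity) hNa (by norm_num)
        _ ≤ (a : ℝ) ^ α := Real.rpow_le_rpow_of_exponent_le ha1 hα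
    have g3 : (1 + 4 * ε) * Real.exp ((a : ℝ) ^ α) ≤ Real.exp (((a + r : ℕ) : ℝ) ^ α) := by
      have e : ((a + r : ℕ) : ℝ) ^ α = (((a + r : ℕ) : ℝ) ^ α - (a : ℝ) ^ α) + (a : ℝ) ^ α := by ring
      rw [e, Real.exp_add]
      refine mul_le_mul_of_nonneg_right ?_ (Real.exp_pos _).le
      have e2 : 4 * ε = 1 / (3 * (D : ℝ)) := by rw [hε]; field_simp; norm_num
      have := Real.add_one_le_exp (((a + r : ℕ) : ℝ) ^ α - (a : ℝ) ^ α)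
      linarith
    have hε1 : ε ≤ 1 / 12 := by
      rw [hε]; exact one_div_le_one_div_of_le (by norm_num) (by linarith)
    have g4 : ε * Real.exp (D * r) ≤ (S (a + r) x : ℝ) - S a x := by
      have : (1 - ε) * ((1 + 4 * ε) * Real.exp ((a : ℝ) ^ α))
          ≤ (1 - ε) * Real.exp (((a + r : ℕ) : ℝ) ^ α) :=
        mul_le_mul_of_nonneg_left g3 (by linarith)
      have g5 : 0 ≤ (ε - 4 * ε ^ 2) * Real.exp ((a : ℝ) ^ α) :=
        mul_nonneg (by nlinarith) (Real.exp_pos _).le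
      nlinarith [mul_le_mul_of_nonneg_left g2 hε0.le]
    refine le_trans ?_ g4
    have e : Real.exp (D * r) = Real.exp (D * r / 2) * Real.exp (D * r / 2) := by
      rw [← Real.exp_add]; ring_nf
    rw [e, ← mul_assoc]
    refine mul_le_mul_of_nonneg_right ?_ (Real.exp_pos _).le
    rw [hε, one_div_mul_eq_div, le_div_iff₀ (by positivity)]
    linarith
  have key := prod_windows hxu (Real.exp_pos _).le hr1 (D ^ 2 * r) hwin
  have key2 := key.trans (prod_Ioc_le hxu _ _)
  have e1 : N + D ^ 2 * r * r + 1 = 2 * N + 1 := by rw [hN]; ring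
  rw [e1, ← Real.exp_nat_mul] at key2
  refine le_trans (le_of_eq (congrArg _ ?_)) key2
  rw [hN]; push_cast; ring

/-! ### The upper bound -/

lemma tsum_prod_pow (f : ℕ → ℝ≥0∞) (n : ℕ) :
    ∑' w : Fin n → ℕ, ∏ i, f (w i) = (∑' k, f k) ^ n := by
  induction n with
  | zero => simp
  | succ n ih =>
    rw [← (Fin.consEquiv (fun _ : Fin (n + 1) => ℕ)).tsum_eq,
      ENNReal.tsum_prod (f := fun k (w : Fin n → ℕ) =>
        ∏ i, f (Fin.consEquiv (fun _ : Fin (n + 1) => ℕ) (k, w) i))]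
    simp only [Fin.consEquiv_apply, Fin.prod_univ_succ, Fin.cons_zero, Fin.cons_succ]
    simp_rw [ENNReal.tsum_mul_left, ENNReal.tsum_mul_right]
    rw [ih, pow_succ']

/-- The points for which, from rank `r₀` on, `(a₁ ⋯ a_n)²` is at least exponential in `n` with rate
about `D / 4`, along `n = 2 (D r)² + 1`. -/
def fastSet (D r₀ : ℕ) : Set ℝ :=
  {x | x ∈ unitIrr ∧ ∀ r ≥ r₀, Real.exp (D * ((D * r) ^ 2 : ℕ) / 2)
      ≤ (∏ i ∈ Finset.range (2 * (D * r) ^ 2 + 1), (pq (i + 1) x : ℝ)) ^ 2}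

/-- With `t = s + 1/2 > 1`, the covering by cylinders of rank `n` costs at most
`∑ (∏ aᵢ)^(-2s) ≤ exp (-c D n) (∑ k^(-t))^n`, which tends to `0` for large `D`. -/
lemma exists_hausdorff_fastSet_eq_zero {s : ℝ} (hs : 1 / 2 < s) :
    ∃ D : ℕ, 1 ≤ D ∧ ∀ r₀, μH[s] (fastSet D r₀) = 0 := by
  set t : ℝ := s + 1 / 2 with ht
  set f : ℕ → ℝ := fun k => ((k : ℝ) + 1) ^ (-t) with hf
  have hf0 : ∀ k, 0 ≤ f k := fun k => by positivity
  have hsum : Summable f := by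
    have := (summable_nat_add_iff 1).2 (Real.summable_nat_rpow.2 (show -t < -1 by linarith))
    simpa [hf] using this
  set Z : ℝ := ∑' k, f k with hZ
  have hZ0 : 0 ≤ Z := tsum_nonneg hf0
  set η : ℝ := s - 1 / 2 with hη
  have hη0 : 0 < η := by linarith
  have hlim : Tendsto (fun D : ℕ => Real.exp (-(η / 4 * D)) * Z ^ 2) atTop (nhds 0) := by
    have : Tendsto (fun D : ℕ => η / 4 * (D : ℝ)) atTop atTop :=
      tendsto_natCast_atTop_atTop.const_mul_atTop (by positivity)
    simpa using (Real.tendsto_exp_neg_atTop_nhds_zero.comp this).mul_const (Z ^ 2)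
  obtain ⟨D, hDsmall, hD⟩ :=
    ((hlim.eventually_le_const (show (0 : ℝ) < 1 / 2 by norm_num)).and (eventually_ge_atTop 1)).exists
  refine ⟨D, hD, fun r₀ => ?_⟩
  have hD' : (1 : ℝ) ≤ D := by exact_mod_cast hD
  let N : ℕ → ℕ := fun r => (D * r) ^ 2
  have hNr : ∀ r, r ≤ N r := fun r =>
    calc r ≤ D * r := Nat.le_mul_of_pos_left r hD
      _ ≤ N r := Nat.le_self_pow two_ne_zero _
  let cyl : ∀ r : ℕ, (Fin (2 * N r + 1) → ℕ) → Set ℝ := fun r w =>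
    {x | x ∈ fastSet D r₀ ∧ ∀ i, pq (i.1 + 1) x = w i + 1}
  have hNtop : Tendsto (fun r => (N r : ℝ)) atTop atTop :=
    tendsto_natCast_atTop_atTop.comp (tendsto_atTop_mono hNr tendsto_id)
  -- diameter of a cylinder
  have hdiam : ∀ r w, Metric.ediam (cyl r w) ≤ ENNReal.ofReal (∏ i, (((w i : ℝ) + 1) ^ 2)⁻¹) := by
    intro r w
    refine Metric.ediam_le fun x hx y hy => ?_
    rw [edist_dist, Real.dist_eq]
    refine ENNReal.ofReal_le_ofReal ?_
    have := abs_sub_le_of_pq_eq (2 * N r + 1) hx.1.1 hy.1.1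
      (fun i hi => (hx.2 ⟨i, hi⟩).trans (hy.2 ⟨i, hi⟩).symm)
    refine this.trans (le_of_eq ?_)
    rw [← Fin.prod_univ_eq_prod_range (fun i => (((pq (i + 1) x : ℕ) : ℝ) ^ 2)⁻¹)]
    refine Finset.prod_congr rfl fun i _ => ?_
    rw [hx.2 i]; push_cast; rfl
  have hfast : ∀ r ≥ r₀, ∀ w, (cyl r w).Nonempty →
      ∏ i, (((w i : ℝ) + 1) ^ 2)⁻¹ ≤ Real.exp (-(D * N r / 2)) := by
    rintro r hr w ⟨x, hx⟩
    have := hx.1.2 r hr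
    rw [← Fin.prod_univ_eq_prod_range (fun i => (pq (i + 1) x : ℝ))] at this
    have e : ∏ i : Fin (2 * N r + 1), (pq (i.1 + 1) x : ℝ) = ∏ i, ((w i : ℝ) + 1) :=
      Finset.prod_congr rfl fun i _ => by rw [hx.2 i]; push_cast; rfl
    change _ ≤ (∏ i : Fin (2 * N r + 1), (pq (i.1 + 1) x : ℝ)) ^ 2 at this
    rw [e] at this
    rw [Finset.prod_inv_distrib, Finset.prod_pow, Real.exp_neg]
    exact inv_anti₀ (Real.exp_pos _) this
  have hcost : ∀ r ≥ r₀, ∀ w, Metric.ediam (cyl r w) ^ s ≤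
      ENNReal.ofReal (Real.exp (-(η / 4 * D)) ^ N r) * ∏ i, ENNReal.ofReal (f (w i)) := by
    intro r hr w
    rcases (cyl r w).eq_empty_or_nonempty with h | h
    · rw [h, Metric.ediam_empty, ENNReal.zero_rpow_of_pos (by linarith)]; exact zero_le
    set Q : ℝ := ∏ i, (((w i : ℝ) + 1) ^ 2)⁻¹ with hQ
    have hQ0 : 0 < Q := Finset.prod_pos fun i _ => by positivity
    have h1 : Q ≤ Real.exp (-(D * N r / 2)) := hfast r hr w h
    refine (ENNReal.rpow_le_rpow (hdiam r w) (by linarith)).trans ?_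
    rw [ENNReal.ofReal_rpow_of_pos hQ0, ← ENNReal.ofReal_prod_of_nonneg (fun i _ => hf0 _),
      ← ENNReal.ofReal_mul (by positivity)]
    refine ENNReal.ofReal_le_ofReal ?_
    have e1 : Q ^ s = Q ^ (η / 2) * Q ^ (t / 2) := by
      rw [← Real.rpow_add hQ0]; congr 1; rw [hη, ht]; ring
    have e2 : Q ^ (t / 2) = ∏ i, f (w i) := by
      rw [hQ, ← Real.finsetProd_rpow _ _ (fun i _ => by positivity)]
      refine Finset.prod_congr rfl fun i _ => ?_
      rw [hf, ← Real.rpow_natCast, ← Real.rpow_neg (by positivity), ← Real.rpow_mul (by positivity)]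
      congr 1; push_cast; ring
    have e3 : Q ^ (η / 2) ≤ Real.exp (-(η / 4 * D)) ^ N r := by
      refine (Real.rpow_le_rpow hQ0.le h1 (by positivity)).trans (le_of_eq ?_)
      rw [← Real.exp_mul, ← Real.exp_nat_mul]; congr 1; ring
    rw [e1, e2]
    exact mul_le_mul_of_nonneg_right e3 (Finset.prod_nonneg fun i _ => hf0 _)
  have hbound : ∀ r ≥ r₀, ∑' w, Metric.ediam (cyl r w) ^ s
      ≤ ENNReal.ofReal (Z * (1 / 2) ^ N r) := by
    intro r hr
    refine (ENNReal.tsum_le_tsum (hcost r hr)).trans ?_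
    rw [ENNReal.tsum_mul_left, tsum_prod_pow (fun k => ENNReal.ofReal (f k)),
      ← ENNReal.ofReal_tsum_of_nonneg hf0 hsum, ← ENNReal.ofReal_pow hZ0,
      ← ENNReal.ofReal_mul (by positivity)]
    refine ENNReal.ofReal_le_ofReal ?_
    have : Real.exp (-(η / 4 * D)) ^ N r * Z ^ (2 * N r + 1)
        = Z * (Real.exp (-(η / 4 * D)) * Z ^ 2) ^ N r := by
      rw [mul_pow, ← pow_mul]; ring
    rw [this]
    exact mul_le_mul_of_nonneg_left (pow_le_pow_left₀ (by positivity) hDsmall _) hZ0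
  have hmain := Measure.hausdorffMeasure_le_liminf_tsum s (fastSet D r₀) (l := atTop)
    (fun r => ENNReal.ofReal (Real.exp (-(D * N r / 2)))) ?_ cyl ?_ ?_
  · have hz : Tendsto (fun r => ∑' w, Metric.ediam (cyl r w) ^ s) atTop (nhds 0) := by
      refine tendsto_of_tendsto_of_tendsto_of_le_of_le' tendsto_const_nhds
        (h := fun r => ENNReal.ofReal (Z * (1 / 2) ^ N r)) ?_ (Eventually.of_forall fun _ => zero_le)
        ((eventually_ge_atTop r₀).mono hbound)
      rw [← ENNReal.ofReal_zero]
      refine ENNReal.tendsto_ofReal ?_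
      have := (tendsto_pow_atTop_nhds_zero_of_lt_one (r := (1 / 2 : ℝ)) (by norm_num)
        (by norm_num)).comp (tendsto_atTop_mono hNr tendsto_id)
      simpa using this.const_mul Z
    rw [hz.liminf_eq] at hmain
    exact le_antisymm hmain zero_le
  · rw [← ENNReal.ofReal_zero]
    refine ENNReal.tendsto_ofReal (Real.tendsto_exp_neg_atTop_nhds_zero.comp ?_)
    exact (hNtop.const_mul_atTop (by linarith : (0 : ℝ) < D)).atTop_div_const (by norm_num)
  · filter_upwards [eventually_ge_atTop r₀] with r hr w
    rcases (cyl r w).eq_empty_or_nonempty with h | h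
    · rw [h, Metric.ediam_empty]; exact zero_le
    · exact (hdiam r w).trans (ENNReal.ofReal_le_ofReal (hfast r hr w h))
  · refine Eventually.of_forall fun r x hx => mem_iUnion.2 ⟨fun i => pq (i.1 + 1) x - 1, hx, ?_⟩
    intro i
    exact (Nat.sub_add_cancel (one_le_pq i hx.1)).symm

lemma dimH_le_half {α : ℝ} (hα : 1 / 2 ≤ α) :
    dimH (Ephi (fun n : ℕ => Real.exp ((n : ℝ) ^ α))) ≤ 1 / 2 := by
  refine le_of_forall_gt fun c hc => ?_
  obtain ⟨s, hs1, hs2⟩ := ENNReal.lt_iff_exists_nnreal_btwn.1 hc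
  have hs : (1 / 2 : ℝ) < s := by
    have : ((1 / 2 : ℝ≥0) : ℝ≥0∞) < s := by
      rw [ENNReal.coe_div two_ne_zero]; simpa using hs1
    exact_mod_cast (ENNReal.coe_lt_coe.1 this)
  obtain ⟨D, hD, h0⟩ := exists_hausdorff_fastSet_eq_zero hs
  refine lt_of_le_of_lt (dimH_le_of_hausdorffMeasure_ne_top ?_) hs2
  have hsub : Ephi (fun n : ℕ => Real.exp ((n : ℝ) ^ α)) ⊆ ⋃ r₀, fastSet D r₀ := by
    intro x hx
    obtain ⟨r₀, hr₀⟩ := eventually_atTop.1 (exp_le_prod hα hx hD)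
    exact mem_iUnion.2 ⟨r₀, ⟨hx.1, hx.2.1⟩, hr₀⟩
  have := measure_mono_null hsub (measure_iUnion_null h0)
  rw [this]; exact ENNReal.zero_ne_top

/-! ### Continued fractions with prescribed digits -/

/-- The finite continued fraction `[0; a₀, …, a_{n-1}]`. -/
noncomputable def cfApprox : ℕ → (ℕ → ℕ) → ℝ
  | 0, _ => 0
  | n + 1, a => 1 / (a 0 + cfApprox n (fun i => a (i + 1)))

/-- The infinite continued fraction `[0; a₀, a₁, …]`; only used when all `aᵢ ≥ 2`, where the
convergents form a Cauchy sequence. -/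
noncomputable def cfVal (a : ℕ → ℕ) : ℝ := limUnder atTop (fun n => cfApprox n a)

lemma cfApprox_mem (n : ℕ) : ∀ {a : ℕ → ℕ}, (∀ i, 2 ≤ a i) →
    0 ≤ cfApprox n a ∧ cfApprox n a ≤ 1 / 2 := by
  induction n with
  | zero => intro a _; norm_num [cfApprox]
  | succ n ih =>
    intro a ha
    have h1 := ih (a := fun i => a (i + 1)) (fun i => ha _)
    have h2 : (2 : ℝ) ≤ a 0 := by exact_mod_cast ha 0
    simp only [cfApprox]
    exact ⟨by have := h1.1; positivity, one_div_le_one_div_of_le two_pos (by linarith)⟩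

lemma cfApprox_dist (n : ℕ) : ∀ {a : ℕ → ℕ}, (∀ i, 2 ≤ a i) →
    dist (cfApprox n a) (cfApprox (n + 1) a) ≤ 1 * (1 / 4) ^ n := by
  induction n with
  | zero =>
    intro a ha
    have h1 := cfApprox_mem 1 ha
    have h0 : cfApprox 0 a = 0 := rfl
    rw [Real.dist_eq, h0, abs_le]
    constructor <;> norm_num <;> linarith
  | succ n ih =>
    intro a ha
    have h := ih (a := fun i => a (i + 1)) (fun i => ha _)
    have h2 : (2 : ℝ) ≤ a 0 := by exact_mod_cast ha 0
    rw [cfApprox, cfApprox]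
    set p := cfApprox n (fun i => a (i + 1))
    set q := cfApprox (n + 1) (fun i => a (i + 1))
    have hp : 0 ≤ p := (cfApprox_mem n (a := fun i => a (i + 1)) (fun i => ha _)).1
    have hq : 0 ≤ q := (cfApprox_mem (n + 1) (a := fun i => a (i + 1)) (fun i => ha _)).1
    rw [Real.dist_eq] at h ⊢
    have e : 1 / ((a 0 : ℝ) + p) - 1 / (a 0 + q) = (q - p) / ((a 0 + p) * (a 0 + q)) := by
      field_simp; ring
    rw [e, abs_div, abs_of_pos (show (0 : ℝ) < (a 0 + p) * (a 0 + q) by positivity),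
      abs_sub_comm, div_le_iff₀ (by positivity), pow_succ]
    have : (4 : ℝ) ≤ (a 0 + p) * (a 0 + q) := by nlinarith
    have h4 : (0 : ℝ) ≤ (1 / 4) ^ n := by positivity
    nlinarith

lemma cfVal_tendsto {a : ℕ → ℕ} (ha : ∀ i, 2 ≤ a i) :
    Tendsto (fun n => cfApprox n a) atTop (nhds (cfVal a)) :=
  (cauchySeq_of_le_geometric (1 / 4) 1 (by norm_num) (fun n => cfApprox_dist n ha)).tendsto_limUnder

lemma cfVal_le {a : ℕ → ℕ} (ha : ∀ i, 2 ≤ a i) : cfVal a ≤ 1 / 2 :=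
  le_of_tendsto' (cfVal_tendsto ha) fun n => (cfApprox_mem n ha).2

lemma cfVal_mul {a : ℕ → ℕ} (ha : ∀ i, 2 ≤ a i) :
    cfVal a * (a 0 + cfVal (fun i => a (i + 1))) = 1 := by
  have hs : ∀ i, 2 ≤ (fun i => a (i + 1)) i := fun i => ha _
  have h0 : 0 ≤ cfVal (fun i => a (i + 1)) :=
    ge_of_tendsto' (cfVal_tendsto hs) fun n => (cfApprox_mem n hs).1
  have h2 : (2 : ℝ) ≤ a 0 := by exact_mod_cast ha 0
  have h1 : Tendsto (fun n => cfApprox (n + 1) a) atTop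
      (nhds (1 / (a 0 + cfVal (fun i => a (i + 1))))) :=
    tendsto_const_nhds.div (tendsto_const_nhds.add (cfVal_tendsto hs)) (by positivity)
  rw [tendsto_nhds_unique ((tendsto_add_atTop_iff_nat 1).2 (cfVal_tendsto ha)) h1]
  field_simp

lemma cfVal_pos {a : ℕ → ℕ} (ha : ∀ i, 2 ≤ a i) : 0 < cfVal a := by
  have h0 : 0 ≤ cfVal a := ge_of_tendsto' (cfVal_tendsto ha) fun n => (cfApprox_mem n ha).1
  refine lt_of_le_of_ne h0 fun h => ?_
  have := cfVal_mul ha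
  rw [← h] at this
  simp at this

/-- If `[0; a₀, a₁, …] = p / q`, then `[0; a₁, a₂, …]` is a rational of denominator `p < q`, so
irrationality follows by descent on `q`. -/
lemma cfVal_ne_rat (q : ℕ) : ∀ {a : ℕ → ℕ}, (∀ i, 2 ≤ a i) → ∀ p : ℕ, cfVal a * q = p → q = 0 := by
  induction q using Nat.strong_induction_on with
  | _ q ih =>
    intro a ha p hp
    by_contra hq
    have hs : ∀ i, 2 ≤ (fun i => a (i + 1)) i := fun i => ha _
    have hq' : (0 : ℝ) < q := by exact_mod_cast Nat.pos_of_ne_zero hq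
    have h0 := cfVal_pos ha
    have h1 := cfVal_le ha
    have hm := cfVal_mul ha
    have hs0 := cfVal_pos hs
    have hpq : (p : ℝ) < q := by rw [← hp]; nlinarith
    have hp0 : (0 : ℝ) < p := by rw [← hp]; positivity
    have e : cfVal (fun i => a (i + 1)) * p = q - a 0 * p := by
      rw [← hp]; linear_combination (q : ℝ) * hm
    have hle : a 0 * p ≤ q := by
      have : (0 : ℝ) < q - a 0 * p := by rw [← e]; positivity
      have : ((a 0 * p : ℕ) : ℝ) ≤ q := by push_cast; linarith
      exact_mod_cast this
    have := ih p (by exact_mod_cast hpq) hs (q - a 0 * p) (by rw [e]; push_cast [hle]; ring)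
    rw [this] at hp0
    simp at hp0

lemma cfVal_mem {a : ℕ → ℕ} (ha : ∀ i, 2 ≤ a i) : cfVal a ∈ unitIrr := by
  have h0 := cfVal_pos ha
  refine ⟨⟨h0, (cfVal_le ha).trans_lt (by norm_num)⟩, ?_⟩
  rintro ⟨r, hr⟩
  have hr0 : 0 < r := by rw [← hr] at h0; exact_mod_cast h0
  have hnum : ((r.num.toNat : ℕ) : ℤ) = r.num := Int.toNat_of_nonneg (Rat.num_pos.2 hr0).le
  refine r.den_ne_zero (cfVal_ne_rat r.den ha r.num.toNat ?_)
  rw [← hr]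
  have h1 : r * r.den = r.num := Rat.mul_den_eq_num r
  have h2 : ((r.num.toNat : ℕ) : ℝ) = (r.num : ℝ) := by exact_mod_cast congrArg (Int.cast (R := ℝ)) hnum
  rw [h2]
  exact_mod_cast congrArg (Rat.cast (K := ℝ)) h1

lemma cfVal_inv {a : ℕ → ℕ} (ha : ∀ i, 2 ≤ a i) :
    1 / cfVal a = a 0 + cfVal (fun i => a (i + 1)) := by
  rw [div_eq_iff (cfVal_pos ha).ne', mul_comm, cfVal_mul ha]

lemma pq_one_cfVal {a : ℕ → ℕ} (ha : ∀ i, 2 ≤ a i) : pq 1 (cfVal a) = a 0 := by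
  have hs : ∀ i, 2 ≤ (fun i => a (i + 1)) i := fun i => ha _
  simp only [pq, Nat.sub_self, Function.iterate_zero, id, cfVal_inv ha]
  have h0 := cfVal_pos hs
  have h1 := cfVal_le hs
  rw [Nat.floor_eq_iff (by positivity)]
  constructor <;> linarith

lemma gaussMap_cfVal {a : ℕ → ℕ} (ha : ∀ i, 2 ≤ a i) :
    gaussMap (cfVal a) = cfVal (fun i => a (i + 1)) := by
  have h := mul_pq_one (cfVal_mem ha)
  rw [pq_one_cfVal ha, ← cfVal_mul ha] at h
  linarith [mul_left_cancel₀ (cfVal_pos ha).ne' h]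

lemma pq_cfVal (n : ℕ) : ∀ {a : ℕ → ℕ}, (∀ i, 2 ≤ a i) → pq (n + 1) (cfVal a) = a n := by
  induction n with
  | zero => exact fun ha => pq_one_cfVal ha
  | succ n ih =>
    intro a ha
    rw [pq_add_two, gaussMap_cfVal ha, ih (fun i => ha _)]

/-- Two continued fractions whose digits first differ at index `n` are separated by at least
`½ ∏_{i ≤ n} Mᵢ⁻²`, where `Mᵢ` bounds the digits plus one. As `[0; aₙ₊₁, …] ≤ 1/2`, the case of
consecutive digits `aₙ` causes no loss. -/
lemma cfVal_sep (n : ℕ) : ∀ {a a' M : ℕ → ℕ}, (∀ i, 2 ≤ a i) → (∀ i, 2 ≤ a' i) →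
    (∀ i, a i + 1 ≤ M i) → (∀ i, a' i + 1 ≤ M i) → (∀ i < n, a i = a' i) → a n ≠ a' n →
    1 / 2 * (∏ i ∈ Finset.range (n + 1), ((M i : ℝ) ^ 2)⁻¹) ≤ |cfVal a - cfVal a'| := by
  have step : ∀ {a a' M : ℕ → ℕ}, (∀ i, 2 ≤ a i) → (∀ i, 2 ≤ a' i) →
      (∀ i, a i + 1 ≤ M i) → (∀ i, a' i + 1 ≤ M i) →
      ((M 0 : ℝ) ^ 2)⁻¹ * |((a 0 : ℝ) + cfVal (fun i => a (i + 1)))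
        - (a' 0 + cfVal (fun i => a' (i + 1)))| ≤ |cfVal a - cfVal a'| := by
    intro a a' M ha ha' hM hM'
    have inv_le : ∀ {a : ℕ → ℕ}, (∀ i, 2 ≤ a i) → (∀ i, a i + 1 ≤ M i) →
        ((M 0 : ℝ))⁻¹ ≤ cfVal a := by
      intro a ha hM
      have h1 := cfVal_inv ha
      have h2 := cfVal_le (a := fun i => a (i + 1)) (fun i => ha _)
      have h3 : ((a 0 : ℝ)) + 1 ≤ M 0 := by exact_mod_cast hM 0
      rw [inv_le_comm₀ (by linarith [Nat.cast_nonneg (α := ℝ) (a 0)]) (cfVal_pos ha), ← one_div, h1]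
      linarith
    have e : cfVal a - cfVal a' = (cfVal a * cfVal a') *
        ((a' 0 + cfVal (fun i => a' (i + 1))) - (a 0 + cfVal (fun i => a (i + 1)))) := by
      linear_combination cfVal a' * cfVal_mul ha - cfVal a * cfVal_mul ha'
    rw [e, abs_mul, abs_of_pos (mul_pos (cfVal_pos ha) (cfVal_pos ha')), abs_sub_comm]
    refine mul_le_mul_of_nonneg_right ?_ (abs_nonneg _)
    rw [← inv_pow, sq]
    exact mul_le_mul (inv_le ha hM) (inv_le ha' hM') (by positivity) (cfVal_pos ha).le
  induction n with
  | zero =>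
    intro a a' M ha ha' hM hM' _ hne
    refine le_trans ?_ (step ha ha' hM hM')
    rw [zero_add, Finset.prod_range_one, mul_comm]
    refine mul_le_mul_of_nonneg_left ?_ (by positivity)
    have p1 := cfVal_pos (a := fun i => a (i + 1)) (fun i => ha _)
    have p2 := cfVal_pos (a := fun i => a' (i + 1)) (fun i => ha' _)
    have q1 := cfVal_le (a := fun i => a (i + 1)) (fun i => ha _)
    have q2 := cfVal_le (a := fun i => a' (i + 1)) (fun i => ha' _)
    rcases lt_or_gt_of_ne hne with h | h
    · have : (a 0 : ℝ) + 1 ≤ a' 0 := by exact_mod_cast h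
      rw [le_abs]; right; linarith
    · have : (a' 0 : ℝ) + 1 ≤ a 0 := by exact_mod_cast h
      rw [le_abs]; left; linarith
  | succ n ih =>
    intro a a' M ha ha' hM hM' heq hne
    refine le_trans ?_ (step ha ha' hM hM')
    have h := ih (a := fun i => a (i + 1)) (a' := fun i => a' (i + 1)) (M := fun i => M (i + 1))
      (fun i => ha _) (fun i => ha' _) (fun i => hM _) (fun i => hM' _)
      (fun i hi => heq _ (by omega)) hne
    rw [heq 0 (by omega), add_sub_add_left_eq_sub, Finset.prod_range_succ', ← mul_assoc,
      mul_comm]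
    exact mul_le_mul_of_nonneg_left h (by positivity)

/-! ### Mixed radix expansions and a Hölder map onto the unit interval -/

/-- The remainders of the expansion of `y` in the mixed radix `N₀, N₁, …`. -/
noncomputable def mrRem (N : ℕ → ℕ) (y : ℝ) : ℕ → ℝ
  | 0 => y
  | n + 1 => Int.fract (N n * mrRem N y n)

/-- The digits of the expansion of `y` in the mixed radix `N₀, N₁, …`, so that
`y = ∑ dₙ / (N₀ ⋯ Nₙ)` with `dₙ < Nₙ` for `0 ≤ y < 1`. -/
noncomputable def mrDig (N : ℕ → ℕ) (y : ℝ) (n : ℕ) : ℕ := ⌊N n * mrRem N y n⌋₊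

lemma mrRem_mem {N : ℕ → ℕ} {y : ℝ} (hy : y ∈ Ico (0 : ℝ) 1) (n : ℕ) :
    mrRem N y n ∈ Ico (0 : ℝ) 1 := by
  cases n with
  | zero => exact hy
  | succ n => exact ⟨Int.fract_nonneg _, Int.fract_lt_one _⟩

lemma mrDig_lt {N : ℕ → ℕ} (hN : ∀ i, 1 ≤ N i) {y : ℝ} (hy : y ∈ Ico (0 : ℝ) 1) (n : ℕ) :
    mrDig N y n < N n := by
  obtain ⟨h0, h1⟩ := mrRem_mem (N := N) hy n
  have hn : (1 : ℝ) ≤ N n := by exact_mod_cast hN n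
  rw [mrDig, Nat.floor_lt (by positivity)]
  nlinarith

lemma mrRem_eq {N : ℕ → ℕ} {y : ℝ} (hy : y ∈ Ico (0 : ℝ) 1) (n : ℕ) :
    N n * mrRem N y n = mrDig N y n + mrRem N y (n + 1) := by
  obtain ⟨h0, h1⟩ := mrRem_mem (N := N) hy n
  rw [mrDig, mrRem, natCast_floor_eq_intCast_floor (by positivity)]
  exact (Int.floor_add_fract _).symm

lemma mr_close {N : ℕ → ℕ} {y y' : ℝ} (hy : y ∈ Ico (0 : ℝ) 1)
    (hy' : y' ∈ Ico (0 : ℝ) 1) (n : ℕ) (h : ∀ i < n, mrDig N y i = mrDig N y' i) :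
    (∏ i ∈ Finset.range n, (N i : ℝ)) * |y - y'| ≤ 1 := by
  have key : (∏ i ∈ Finset.range n, (N i : ℝ)) * (y - y') = mrRem N y n - mrRem N y' n := by
    induction n with
    | zero => simp [mrRem]
    | succ n ih =>
      have := ih (fun i hi => h i (by omega))
      have e1 := mrRem_eq (N := N) hy n
      have e2 := mrRem_eq (N := N) hy' n
      rw [← h n (by omega)] at e2
      rw [Finset.prod_range_succ]
      linear_combination (N n : ℝ) * this + e1 - e2
  have hpos : 0 ≤ ∏ i ∈ Finset.range n, (N i : ℝ) := Finset.prod_nonneg fun i _ => by positivity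
  rw [← abs_of_nonneg hpos, ← abs_mul, key, abs_le]
  obtain ⟨h0, h1⟩ := mrRem_mem (N := N) hy n
  obtain ⟨h2, h3⟩ := mrRem_mem (N := N) hy' n
  constructor <;> linarith

/-- Lower bound for the dimension of a set containing all continued fractions with digits in the
blocks `[cᵢ, cᵢ + Nᵢ)`: reading the digits `aᵢ - cᵢ` in the mixed radix `N` defines an `s`-Hölder
map onto `[0, 1)`, whose dimension is `1`. -/
lemma le_dimH_of_blocks {c N : ℕ → ℕ} (hc : ∀ i, 2 ≤ c i) (hN : ∀ i, 1 ≤ N i) {s : ℝ≥0}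
    (hs : 0 < s) {C : ℝ}
    (hC : ∀ n, ∏ i ∈ Finset.range (n + 1), ((c i + N i : ℕ) : ℝ) ^ (2 * (s : ℝ))
      ≤ C * ∏ i ∈ Finset.range n, (N i : ℝ)) {K : Set ℝ}
    (hK : ∀ a : ℕ → ℕ, (∀ i, c i ≤ a i ∧ a i < c i + N i) → cfVal a ∈ K) :
    (s : ℝ≥0∞) ≤ dimH K := by
  have hs' : (0 : ℝ) < s := by exact_mod_cast hs
  set d : ℝ → ℕ → ℕ := fun y i => c i + mrDig N y i with hd
  set g : ℝ → ℝ := fun y => cfVal (d y) with hg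
  have hd2 : ∀ y i, 2 ≤ d y i := fun y i => (hc i).trans (Nat.le_add_right _ _)
  have hdM : ∀ y ∈ Ico (0 : ℝ) 1, ∀ i, d y i + 1 ≤ c i + N i := fun y hy i => by
    have := mrDig_lt hN hy i
    simp only [hd]; omega
  have hNpos : ∀ n, 0 < ∏ i ∈ Finset.range n, (N i : ℝ) := fun n =>
    Finset.prod_pos fun i _ => by exact_mod_cast hN i
  have hMpos : ∀ i, (0 : ℝ) < ((c i + N i : ℕ) : ℝ) := fun i => by
    have := hN i; exact_mod_cast (by omega : 0 < c i + N i)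
  have hC0 : 0 < C := by
    have h0 := hC 0
    simp only [zero_add, Finset.prod_range_one, Finset.range_zero, Finset.prod_empty, mul_one] at h0
    exact (Real.rpow_pos_of_pos (hMpos 0) _).trans_le h0
  set B : ℝ := C * 2 ^ (s : ℝ) with hB
  have hB0 : 0 < B := by positivity
  -- separation: the inverse of `g` is `s`-Hölder
  have hsep : ∀ y ∈ Ico (0 : ℝ) 1, ∀ y' ∈ Ico (0 : ℝ) 1,
      |y - y'| ≤ B * |g y - g y'| ^ (s : ℝ) := by
    intro y hy y' hy'
    by_cases hall : ∀ i, mrDig N y i = mrDig N y' i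
    · have hz : Tendsto (fun n : ℕ => C * (1 / (2 : ℝ) ^ (2 * (s : ℝ))) ^ (n + 1)) atTop (nhds 0) := by
        have h1 : 1 / (2 : ℝ) ^ (2 * (s : ℝ)) < 1 := by
          rw [div_lt_one (by positivity)]
          exact Real.one_lt_rpow (by norm_num) (by positivity)
        simpa using ((tendsto_pow_atTop_nhds_zero_of_lt_one (by positivity) h1).comp
          (tendsto_add_atTop_nat 1)).const_mul C
      have hle : ∀ n, |y - y'| ≤ C * (1 / (2 : ℝ) ^ (2 * (s : ℝ))) ^ (n + 1) := by
        intro n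
        have h1 := mr_close hy hy' n (fun i _ => hall i)
        have h2 : ((2 : ℝ) ^ (2 * (s : ℝ))) ^ (n + 1) ≤
            ∏ i ∈ Finset.range (n + 1), ((c i + N i : ℕ) : ℝ) ^ (2 * (s : ℝ)) := by
          have : ((2 : ℝ) ^ (2 * (s : ℝ))) ^ (n + 1)
              = ∏ i ∈ Finset.range (n + 1), (2 : ℝ) ^ (2 * (s : ℝ)) := by simp
          rw [this]
          refine Finset.prod_le_prod (fun _ _ => by positivity) fun i _ => ?_
          refine Real.rpow_le_rpow (by norm_num) ?_ (by positivity)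
          exact_mod_cast (hc i).trans (Nat.le_add_right _ _)
        have h3 := h2.trans (hC n)
        rw [one_div, inv_pow, ← div_eq_mul_inv, le_div_iff₀ (by positivity)]
        calc |y - y'| * ((2 : ℝ) ^ (2 * (s : ℝ))) ^ (n + 1)
            ≤ |y - y'| * (C * ∏ i ∈ Finset.range n, (N i : ℝ)) :=
              mul_le_mul_of_nonneg_left h3 (abs_nonneg _)
          _ = C * ((∏ i ∈ Finset.range n, (N i : ℝ)) * |y - y'|) := by ring
          _ ≤ C := mul_le_of_le_one_right hC0.le h1
      exact (ge_of_tendsto' hz hle).trans (by positivity)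
    · push Not at hall
      classical
      have hn := Nat.find_spec hall
      have hmin : ∀ i < Nat.find hall, mrDig N y i = mrDig N y' i := fun i hi =>
        not_not.1 (Nat.find_min hall hi)
      set n := Nat.find hall
      have h1 := mr_close hy hy' n hmin
      have h2 := cfVal_sep n (M := fun i => c i + N i) (hd2 y) (hd2 y') (hdM y hy) (hdM y' hy')
        (fun i hi => by simp only [hd, hmin i hi]) (by simp only [hd]; omega)
      have hP : 0 < ∏ i ∈ Finset.range (n + 1), ((c i + N i : ℕ) : ℝ) :=
        Finset.prod_pos fun i _ => hMpos i
      have hCn := hC n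
      rw [Real.finsetProd_rpow _ _ (fun i _ => (hMpos i).le)] at hCn
      rw [Finset.prod_inv_distrib, Finset.prod_pow] at h2
      set P := ∏ i ∈ Finset.range (n + 1), ((c i + N i : ℕ) : ℝ)
      set R := ∏ i ∈ Finset.range n, (N i : ℝ)
      have hR : 0 < R := hNpos n
      have h3 := Real.rpow_le_rpow (by positivity) h2 hs'.le
      have e : (1 / 2 * (P ^ 2)⁻¹) ^ (s : ℝ) = (2 ^ (s : ℝ))⁻¹ * (P ^ (2 * (s : ℝ)))⁻¹ := by
        rw [Real.mul_rpow (by norm_num) (by positivity), one_div, Real.inv_rpow (by norm_num),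
          Real.inv_rpow (by positivity), ← Real.rpow_natCast, ← Real.rpow_mul hP.le]
        norm_num
      rw [e] at h3
      have hP2 : 0 < P ^ (2 * (s : ℝ)) := by positivity
      calc |y - y'| ≤ 1 / R := by rw [le_div_iff₀ hR]; linarith
        _ ≤ C * (P ^ (2 * (s : ℝ)))⁻¹ := by
            rw [← div_eq_mul_inv, div_le_div_iff₀ hR hP2]; linarith
        _ = B * ((2 ^ (s : ℝ))⁻¹ * (P ^ (2 * (s : ℝ)))⁻¹) := by
            rw [hB]; field_simp
        _ ≤ _ := mul_le_mul_of_nonneg_left h3 hB0.le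
  have hinj : InjOn g (Ico 0 1) := by
    intro y hy y' hy' h
    have := hsep y hy y' hy'
    rw [h, sub_self, abs_zero, Real.zero_rpow hs'.ne', mul_zero] at this
    exact sub_eq_zero.1 (abs_nonpos_iff.1 this)
  set f := Function.invFunOn g (Ico (0 : ℝ) 1) with hf
  have hfg : ∀ y ∈ Ico (0 : ℝ) 1, f (g y) = y := fun y hy => hinj.leftInvOn_invFunOn hy
  have hhol : HolderOnWith B.toNNReal s f (g '' Ico 0 1) := by
    rintro _ ⟨y, hy, rfl⟩ _ ⟨y', hy', rfl⟩
    rw [hfg y hy, hfg y' hy', edist_dist, edist_dist, Real.dist_eq, Real.dist_eq,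
      ENNReal.ofReal_rpow_of_nonneg (abs_nonneg _) hs'.le]
    change _ ≤ ENNReal.ofReal B * _
    rw [← ENNReal.ofReal_mul hB0.le]
    exact ENNReal.ofReal_le_ofReal (hsep y hy y' hy')
  have h1 := hhol.dimH_image_le hs
  have himg : f '' (g '' Ico 0 1) = Ico (0 : ℝ) 1 := by
    rw [← image_comp]
    exact (image_congr hfg).trans (image_id _)
  have hdim : dimH (Ico (0 : ℝ) 1) = 1 := by
    rw [Real.dimH_of_nonempty_interior (by rw [interior_Ico]; exact ⟨1 / 2, by norm_num⟩)]
    simp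
  rw [himg, hdim, ENNReal.le_div_iff_mul_le (Or.inl (by exact_mod_cast hs.ne'))
    (Or.inl ENNReal.coe_ne_top), one_mul] at h1
  refine h1.trans (dimH_mono ?_)
  rintro _ ⟨y, hy, rfl⟩
  exact hK _ fun i => ⟨Nat.le_add_right _ _, Nat.lt_of_succ_le (hdM y hy i)⟩

/-! ### The target sequence of partial quotients -/

/-- The increment `φ(m + 1) - φ(m)` of `φ(n) = exp (n ^ α)`. -/
noncomputable def incr (α : ℝ) (m : ℕ) : ℝ :=
  Real.exp (((m + 1 : ℕ) : ℝ) ^ α) - Real.exp ((m : ℝ) ^ α)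

/-- The target size of the partial quotients: `b₀ = 1` and `bₘ bₘ₊₁ = φ(m + 1) - φ(m)`. -/
noncomputable def base (α : ℝ) : ℕ → ℝ
  | 0 => 1
  | m + 1 => incr α m / base α m

lemma incr_pos {α : ℝ} (hα : 0 < α) (m : ℕ) : 0 < incr α m := by
  rw [incr, sub_pos, Real.exp_lt_exp]
  exact Real.rpow_lt_rpow (by positivity) (by push_cast; linarith) hα

lemma base_pos {α : ℝ} (hα : 0 < α) (m : ℕ) : 0 < base α m := by
  induction m with
  | zero => exact one_pos
  | succ m ih => exact div_pos (incr_pos hα m) ih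

lemma base_mul {α : ℝ} (hα : 0 < α) (m : ℕ) : base α m * base α (m + 1) = incr α m := by
  rw [base, mul_div_cancel₀ _ (base_pos hα m).ne']

/-- Consecutive increments of `n ^ α` satisfy `δₘ₊₁ / δₘ ≥ m / (m + 2)`; for `α ≤ 1` and for `α ≥ 1`
this follows from the corresponding Bernoulli inequality. -/
lemma rpow_incr_ratio {α : ℝ} (hα : 0 < α) {m : ℕ} (hm : 1 ≤ m) :
    (m : ℝ) * (((m + 1 : ℕ) : ℝ) ^ α - (m : ℝ) ^ α)
      ≤ (m + 2) * (((m + 2 : ℕ) : ℝ) ^ α - ((m + 1 : ℕ) : ℝ) ^ α) := by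
  have hm' : (1 : ℝ) ≤ m := by exact_mod_cast hm
  push_cast
  set z : ℝ := (m : ℝ)
  have hz : 0 < z := by linarith
  rcases le_total α 1 with h1 | h1
  · have e1 : (z + 1) ^ α = z ^ α * (1 + 1 / z) ^ α := by
      rw [← Real.mul_rpow hz.le (by positivity)]; congr 1; field_simp
    have e2 : (z + 1) ^ α = (z + 2) ^ α * (1 + -(1 / (z + 2))) ^ α := by
      have : 0 ≤ 1 + -(1 / (z + 2)) := by
        have : 1 / (z + 2) ≤ 1 := by rw [div_le_one (by positivity)]; linarith
        linarith
      rw [← Real.mul_rpow (by positivity) this]; congr 1; field_simp; ring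
    have b1 := rpow_one_add_le_one_add_mul_self (s := 1 / z)
      (by have : 0 < 1 / z := by positivity
          linarith) hα.le h1
    have b2 := rpow_one_add_le_one_add_mul_self (s := -(1 / (z + 2)))
      (by have : 1 / (z + 2) ≤ 1 := by rw [div_le_one (by positivity)]; linarith
          linarith) hα.le h1
    have hmono : z ^ α ≤ (z + 2) ^ α := Real.rpow_le_rpow hz.le (by linarith) hα.le
    have l1 : z * ((z + 1) ^ α - z ^ α) ≤ α * z ^ α := by
      rw [e1]
      calc z * (z ^ α * (1 + 1 / z) ^ α - z ^ α)
          = z * z ^ α * ((1 + 1 / z) ^ α - 1) := by ring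
        _ ≤ z * z ^ α * (α * (1 / z)) :=
            mul_le_mul_of_nonneg_left (by linarith) (by positivity)
        _ = α * z ^ α := by field_simp
    have l2 : α * (z + 2) ^ α ≤ (z + 2) * ((z + 2) ^ α - (z + 1) ^ α) := by
      rw [e2]
      calc α * (z + 2) ^ α = (z + 2) * (z + 2) ^ α * (α * (1 / (z + 2))) := by field_simp
        _ ≤ (z + 2) * (z + 2) ^ α * (1 - (1 + -(1 / (z + 2))) ^ α) :=
            mul_le_mul_of_nonneg_left (by linarith) (by positivity)
        _ = _ := by ring
    nlinarith
  · have e1 : z ^ α = (z + 1) ^ α * (1 + -(1 / (z + 1))) ^ α := by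
      have : 0 ≤ 1 + -(1 / (z + 1)) := by
        have : 1 / (z + 1) ≤ 1 := by rw [div_le_one (by positivity)]; linarith
        linarith
      rw [← Real.mul_rpow (by positivity) this]; congr 1; field_simp; ring
    have e2 : (z + 2) ^ α = (z + 1) ^ α * (1 + 1 / (z + 1)) ^ α := by
      rw [← Real.mul_rpow (by positivity) (by positivity)]; congr 1; field_simp; ring
    have b1 := one_add_mul_self_le_rpow_one_add (s := 1 / (z + 1))
      (by have : 0 < 1 / (z + 1) := by positivity
          linarith) h1
    have b2 := one_add_mul_self_le_rpow_one_add (s := -(1 / (z + 1)))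
      (by have : 1 / (z + 1) ≤ 1 := by rw [div_le_one (by positivity)]; linarith
          linarith) h1
    have hp : 0 < (z + 1) ^ α := by positivity
    have l : (z + 1) ^ α - z ^ α ≤ (z + 2) ^ α - (z + 1) ^ α := by
      rw [e1, e2]; nlinarith
    have l0 : 0 ≤ (z + 1) ^ α - z ^ α :=
      sub_nonneg.2 (Real.rpow_le_rpow hz.le (by linarith) hα.le)
    nlinarith

lemma rpow_incr_ge {α : ℝ} (hα : 1 / 2 ≤ α) {m : ℕ} (hm : 1 ≤ m) :
    1 / (2 * √((m + 1 : ℕ) : ℝ)) ≤ ((m + 1 : ℕ) : ℝ) ^ α - (m : ℝ) ^ α := by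
  have hm' : (1 : ℝ) ≤ m := by exact_mod_cast hm
  have h1 := sqrt_sub_sqrt_le_rpow_sub_rpow hα (b := ((m + 1 : ℕ) : ℝ)) hm'
    (by push_cast; linarith)
  have h2 := sub_div_le_sqrt_sub (a := (m : ℝ)) (b := ((m + 1 : ℕ) : ℝ)) (by positivity)
    (by positivity) (by push_cast; linarith)
  refine le_trans (le_of_eq ?_) (h2.trans h1)
  push_cast; ring

/-- With `δ = (m+2)^α - (m+1)^α` and `δ' = (m+1)^α - m^α`, the ratio of consecutive increments is
`(e^δ - 1) / (1 - e^{-δ'}) ≥ δ (1 + δ/2) / δ'`, where `δ ≥ 1 / (2 √(m+2))` beats the loss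
`δ / δ' ≥ m / (m+2)`. -/
lemma incr_ratio {α : ℝ} (hα : 1 / 2 ≤ α) {m : ℕ} (hm : 1000 ≤ m) :
    incr α m * (m + 3) ≤ incr α (m + 1) * (m + 1) := by
  have hα0 : 0 < α := by linarith
  have hm' : (1000 : ℝ) ≤ m := by exact_mod_cast hm
  have hr := rpow_incr_ratio hα0 (show 1 ≤ m by omega)
  have hl := rpow_incr_ge hα (show 1 ≤ m + 1 by omega)
  rw [show m + 1 + 1 = m + 2 from rfl] at hl
  set δ : ℝ := ((m + 2 : ℕ) : ℝ) ^ α - ((m + 1 : ℕ) : ℝ) ^ α with hδ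
  set δ' : ℝ := ((m + 1 : ℕ) : ℝ) ^ α - (m : ℝ) ^ α with hδ'
  set E : ℝ := Real.exp (((m + 1 : ℕ) : ℝ) ^ α) with hE
  have hE0 : 0 < E := Real.exp_pos _
  set t : ℝ := √((m + 2 : ℕ) : ℝ) with ht
  have ht2 : t ^ 2 = m + 2 := by rw [ht, Real.sq_sqrt (by positivity)]; push_cast; ring
  have ht30 : 30 ≤ t := by
    rw [ht]; refine Real.le_sqrt_of_sq_le ?_; push_cast; linarith
  have hδ0 : 0 < δ := lt_of_lt_of_le (by positivity) hl
  have i1 : incr α m ≤ E * δ' := by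
    have e : Real.exp ((m : ℝ) ^ α) = E * Real.exp (-δ') := by
      rw [hE, ← Real.exp_add]; congr 1; rw [hδ']; ring
    rw [incr, e]
    nlinarith [Real.add_one_le_exp (-δ')]
  have i2 : E * (δ + δ ^ 2 / 2) ≤ incr α (m + 1) := by
    have e : Real.exp (((m + 1 + 1 : ℕ) : ℝ) ^ α) = E * Real.exp δ := by
      rw [hE, ← Real.exp_add]; congr 1; rw [hδ]; ring
    rw [incr, e]
    nlinarith [Real.quadratic_le_exp_of_nonneg hδ0.le]
  have hmz : (m : ℝ) = t ^ 2 - 2 := by linarith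
  have key : (m + 2) * (m + 3) ≤ (1 + δ / 2) * ((m : ℝ) * (m + 1)) := by
    have h1 : 1 / (4 * t) ≤ δ / 2 := by
      have : 1 / (4 * t) = 1 / (2 * t) / 2 := by field_simp; norm_num
      rw [this]; linarith
    have h2 : (m + 2) * (m + 3) ≤ (1 + 1 / (4 * t)) * ((m : ℝ) * (m + 1)) := by
      have : (1 + 1 / (4 * t)) * ((m : ℝ) * (m + 1)) - (m + 2) * (m + 3)
          = ((m : ℝ) * (m + 1) - 4 * t * (4 * m + 6)) / (4 * t) := by field_simp; ring
      have h3 : 0 ≤ ((m : ℝ) * (m + 1) - 4 * t * (4 * m + 6)) / (4 * t) := by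
        refine div_nonneg ?_ (by positivity)
        rw [hmz]
        nlinarith [mul_nonneg (show 0 ≤ t - 30 by linarith) (pow_nonneg (show 0 ≤ t by linarith) 3),
          mul_nonneg (show 0 ≤ t - 30 by linarith) (pow_nonneg (show 0 ≤ t by linarith) 2)]
      linarith
    refine h2.trans (mul_le_mul_of_nonneg_right (by linarith) (by positivity))
  have hfin : E * δ' * (m + 3) ≤ E * (δ + δ ^ 2 / 2) * (m + 1) := by
    have h4 : δ' * (m + 3) * m ≤ (δ + δ ^ 2 / 2) * (m + 1) * m := by
      calc δ' * (m + 3) * m = (m * δ') * (m + 3) := by ring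
        _ ≤ ((m + 2) * δ) * (m + 3) := mul_le_mul_of_nonneg_right hr (by positivity)
        _ = δ * ((m + 2) * (m + 3)) := by ring
        _ ≤ δ * ((1 + δ / 2) * ((m : ℝ) * (m + 1))) := mul_le_mul_of_nonneg_left key hδ0.le
        _ = _ := by ring
    have h5 := le_of_mul_le_mul_right h4 (by linarith)
    calc E * δ' * (m + 3) = E * (δ' * (m + 3)) := by ring
      _ ≤ E * ((δ + δ ^ 2 / 2) * (m + 1)) := mul_le_mul_of_nonneg_left h5 hE0.le
      _ = _ := by ring
  calc incr α m * (m + 3) ≤ E * δ' * (m + 3) := mul_le_mul_of_nonneg_right i1 (by positivity)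
    _ ≤ _ := hfin
    _ ≤ _ := mul_le_mul_of_nonneg_right i2 (by positivity)

/-- Since `bₘ₊₂ / bₘ = incr (m + 1) / incr m ≥ (m + 3) / (m + 1)` eventually, `bₘ / (m + 1)` is
eventually nondecreasing along each parity class. -/
lemma exists_base_ge {α : ℝ} (hα : 1 / 2 ≤ α) : ∃ c > 0, ∀ m : ℕ, c * (m + 1) ≤ base α m := by
  have hα0 : 0 < α := by linarith
  -- below this bound `incr_ratio`, used at `m - 2`, is not available
  obtain ⟨M, hM⟩ : ∃ M : ℕ, M = 1002 := ⟨_, rfl⟩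
  obtain ⟨c, hc0, hc⟩ : ∃ c > 0, ∀ m ∈ Finset.range M, c ≤ base α m / (m + 1) := by
    have hne : (Finset.range M).Nonempty := ⟨0, Finset.mem_range.2 (by omega)⟩
    refine ⟨(Finset.range M).inf' hne (fun m => base α m / (m + 1)), ?_, fun m hm =>
      Finset.inf'_le (fun m : ℕ => base α m / ((m : ℝ) + 1)) hm⟩
    rw [gt_iff_lt, Finset.lt_inf'_iff]
    intro m _
    have := base_pos hα0 m
    positivity
  refine ⟨c, hc0, fun m => ?_⟩
  induction m using Nat.strong_induction_on with
  | _ m ih =>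
    rcases lt_or_ge m M with h | h
    · have := hc m (Finset.mem_range.2 h)
      rwa [le_div_iff₀ (by positivity)] at this
    · obtain ⟨k, rfl⟩ : ∃ k, m = k + 2 := ⟨m - 2, by omega⟩
      have h1 := ih k (by omega)
      have h2 := incr_ratio hα (m := k) (by omega)
      have b0 := base_pos hα0 k
      have b1 := base_pos hα0 (k + 1)
      rw [← base_mul hα0, ← base_mul hα0] at h2
      have h3 : base α k * (k + 3) ≤ base α (k + 2) * (k + 1) := by
        refine le_of_mul_le_mul_left ?_ b1
        calc _ = base α k * base α (k + 1) * (k + 3) := by ring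
          _ ≤ _ := h2
          _ = _ := by ring
      have h4 : c * (k + 3) * (k + 1) ≤ base α (k + 2) * (k + 1) := by
        nlinarith [mul_le_mul_of_nonneg_right h1 (show (0 : ℝ) ≤ k + 3 by positivity)]
      have h5 := le_of_mul_le_mul_right h4 (by positivity)
      push_cast; linarith

lemma base_tendsto {α : ℝ} (hα : 1 / 2 ≤ α) : Tendsto (base α) atTop atTop := by
  obtain ⟨c, hc, h⟩ := exists_base_ge hα
  refine tendsto_atTop_mono h (Tendsto.const_mul_atTop hc ?_)
  exact tendsto_atTop_add_const_right _ _ tendsto_natCast_atTop_atTop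

lemma incr_ge {α : ℝ} (hα : 1 / 2 ≤ α) :
    ∀ᶠ m : ℕ in atTop, Real.exp ((m : ℝ) ^ α / 2) ≤ incr α m := by
  have hsq : Tendsto (fun m : ℕ => √(m : ℝ)) atTop atTop :=
    Real.tendsto_sqrt_atTop.comp tendsto_natCast_atTop_atTop
  have h2 : ∀ᶠ z : ℝ in atTop, 4 * z ≤ Real.exp (z / 2) := by
    have := (Real.tendsto_exp_div_pow_atTop 1).comp
      (tendsto_id.atTop_div_const (show (0 : ℝ) < 2 by norm_num))
    filter_upwards [this.eventually_ge_atTop 8, eventually_gt_atTop 0] with z hz hz0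
    simp only [Function.comp, id, pow_one] at hz
    rw [le_div_iff₀ (by positivity)] at hz
    linarith
  filter_upwards [hsq.eventually h2, eventually_ge_atTop 1] with m hm hm1
  have hm' : (1 : ℝ) ≤ m := by exact_mod_cast hm1
  have h3 := rpow_incr_ge hα hm1
  set δ := ((m + 1 : ℕ) : ℝ) ^ α - (m : ℝ) ^ α with hδ
  have e : incr α m = Real.exp ((m : ℝ) ^ α) * (Real.exp δ - 1) := by
    rw [incr, mul_sub, mul_one, ← Real.exp_add, hδ]; congr 2; ring
  have e2 : Real.exp ((m : ℝ) ^ α) = Real.exp ((m : ℝ) ^ α / 2) * Real.exp ((m : ℝ) ^ α / 2) := by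
    rw [← Real.exp_add]; congr 1; ring
  have h4 : √(m : ℝ) ≤ (m : ℝ) ^ α := by
    rw [Real.sqrt_eq_rpow]; exact Real.rpow_le_rpow_of_exponent_le hm' hα
  have h5 : 4 * √(m : ℝ) ≤ Real.exp ((m : ℝ) ^ α / 2) :=
    hm.trans (Real.exp_le_exp.2 (by linarith))
  have h6 : √((m + 1 : ℕ) : ℝ) ≤ 2 * √(m : ℝ) := by
    rw [Real.sqrt_le_left (by positivity), mul_pow, Real.sq_sqrt (by positivity)]
    push_cast; linarith
  have h7 : 0 < √((m + 1 : ℕ) : ℝ) := Real.sqrt_pos.2 (by positivity)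
  rw [e, e2, mul_assoc]
  refine le_mul_of_one_le_right (Real.exp_pos _).le ?_
  calc 1 ≤ (4 * √(m : ℝ)) * (1 / (2 * √((m + 1 : ℕ) : ℝ))) := by
        rw [mul_one_div, le_div_iff₀ (by positivity)]; linarith
    _ ≤ Real.exp ((m : ℝ) ^ α / 2) * (Real.exp δ - 1) := by
        refine mul_le_mul h5 ?_ (by positivity) (Real.exp_pos _).le
        linarith [Real.add_one_le_exp δ]

lemma sum_incr {α : ℝ} (hα : 0 < α) (n : ℕ) :
    ∑ i ∈ Finset.range n, incr α i = Real.exp ((n : ℝ) ^ α) - 1 := by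
  have := Finset.sum_range_sub (fun m : ℕ => Real.exp ((m : ℝ) ^ α)) n
  simp only [incr]
  rw [this]
  simp [Real.zero_rpow hα.ne']

/-! ### The lower bound -/

lemma S_eq_sum_range (n : ℕ) (x : ℝ) :
    (S n x : ℝ) = ∑ i ∈ Finset.range n, (pq (i + 1) x : ℝ) * pq (i + 2) x := by
  rw [S, Finset.range_eq_Ico, Finset.sum_Ico_add' (fun i => (pq i x : ℝ) * pq (i + 1) x) 0 n 1]
  push_cast
  congr 1

lemma exp_rpow_tendsto {α : ℝ} (hα : 0 < α) :
    Tendsto (fun n : ℕ => Real.exp ((n : ℝ) ^ α)) atTop atTop :=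
  Real.tendsto_exp_atTop.comp ((tendsto_rpow_atTop hα).comp tendsto_natCast_atTop_atTop)

/-- If `aᵢ ~ bᵢ`, then `aᵢ aᵢ₊₁ ~ φ(i + 1) - φ(i)`, and summing gives `S_n ~ φ(n)`. -/
lemma cfVal_mem_Ephi {α : ℝ} (hα : 0 < α) {a : ℕ → ℕ} (ha : ∀ i, 2 ≤ a i)
    (hlim : Tendsto (fun i => (a i : ℝ) / base α i) atTop (nhds 1)) :
    cfVal a ∈ Ephi (fun n : ℕ => Real.exp ((n : ℝ) ^ α)) := by
  refine ⟨(cfVal_mem ha).1, (cfVal_mem ha).2, ?_⟩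
  have hS : ∀ n, (S n (cfVal a) : ℝ) = ∑ i ∈ Finset.range n, (a i : ℝ) * a (i + 1) := fun n => by
    rw [S_eq_sum_range]
    refine Finset.sum_congr rfl fun i _ => ?_
    rw [pq_cfVal i ha, pq_cfVal (i + 1) ha]
  have h1 : Tendsto (fun i => ((a i : ℝ) * a (i + 1) - incr α i) / incr α i) atTop (nhds 0) := by
    have := (hlim.mul ((tendsto_add_atTop_iff_nat 1).2 hlim)).sub_const 1
    rw [one_mul, sub_self] at this
    refine this.congr fun i => ?_
    have b0 := base_pos hα i
    have b1 := base_pos hα (i + 1)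
    rw [← base_mul hα]
    field_simp
  have h2 : (fun i => (a i : ℝ) * a (i + 1) - incr α i) =o[atTop] incr α :=
    (Asymptotics.isLittleO_iff_tendsto fun i hi => absurd hi (incr_pos hα i).ne').2 h1
  have hφ := exp_rpow_tendsto hα
  have htop : Tendsto (fun n => ∑ i ∈ Finset.range n, incr α i) atTop atTop := by
    simp only [sum_incr hα]
    exact tendsto_atTop_add_const_right _ (-1) hφ
  have h3 := h2.sum_range (fun i => (incr_pos hα i).le) htop
  have h4 : (fun n : ℕ => ∑ i ∈ Finset.range n, incr α i)
      =O[atTop] fun n : ℕ => Real.exp ((n : ℝ) ^ α) := by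
    refine Asymptotics.IsBigO.of_bound 1 (Eventually.of_forall fun n => ?_)
    have h0 : 0 ≤ ∑ i ∈ Finset.range n, incr α i :=
      Finset.sum_nonneg fun i _ => (incr_pos hα i).le
    rw [Real.norm_of_nonneg h0, Real.norm_of_nonneg (Real.exp_pos _).le, sum_incr hα]
    linarith
  have h5 := (h3.trans_isBigO h4).tendsto_div_nhds_zero
  have h6 : Tendsto (fun n : ℕ => 1 / Real.exp ((n : ℝ) ^ α)) atTop (nhds 0) :=
    tendsto_const_nhds.div_atTop hφ
  have h7 := (h5.sub h6).add_const 1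
  rw [sub_zero, zero_add] at h7
  refine h7.congr fun n => ?_
  have hp := Real.exp_pos ((n : ℝ) ^ α)
  rw [Finset.sum_sub_distrib, sum_incr hα, hS]
  field_simp
  ring

/-- If `θ uᵢ ≤ vᵢ` and `σ uₙ ≤ (θ - σ) ∑_{i<n} uᵢ` eventually, then `σ ∑_{i≤n} uᵢ` exceeds
`∑_{i<n} vᵢ` by at most a constant. -/
lemma bddAbove_sum {u v : ℕ → ℝ} {σ θ : ℝ} (hv : ∀ i, 0 ≤ v i)
    (huv : ∀ᶠ i in atTop, θ * u i ≤ v i)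
    (hu : ∀ᶠ n in atTop, σ * u n ≤ (θ - σ) * ∑ i ∈ Finset.range n, u i) :
    BddAbove (Set.range fun n => σ * ∑ i ∈ Finset.range (n + 1), u i - ∑ i ∈ Finset.range n, v i) := by
  refine Filter.IsBoundedUnder.bddAbove_range ?_
  obtain ⟨i₀, hi₀⟩ := eventually_atTop.1 huv
  refine ⟨θ * ∑ i ∈ Finset.range i₀, u i, ?_⟩
  rw [eventually_map]
  filter_upwards [hu, eventually_ge_atTop i₀] with n hn hni
  have h1 : θ * ∑ i ∈ Finset.Ico i₀ n, u i ≤ ∑ i ∈ Finset.Ico i₀ n, v i := by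
    rw [Finset.mul_sum]
    exact Finset.sum_le_sum fun i hi => hi₀ i (Finset.mem_Ico.1 hi).1
  have h2 := Finset.sum_range_add_sum_Ico u hni
  have h3 := Finset.sum_range_add_sum_Ico v hni
  have h4 : 0 ≤ ∑ i ∈ Finset.range i₀, v i := Finset.sum_nonneg fun i _ => hv i
  rw [Finset.sum_range_succ, ← h3]
  rw [← h2] at hn ⊢
  nlinarith

/-- If `uᵢ + uᵢ₊₁ ≥ i ^ α / 2` and `uₙ = O(n ^ α)`, then `uₙ = o(∑_{i<n} uᵢ)`: compare with the last
`2 L` terms of the sum, for `L` large. -/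
lemma negligible {u : ℕ → ℝ} {α K σ κ : ℝ} (hα : 0 < α) (hσ : 0 ≤ σ) (hκ : 0 < κ) (hu0 : ∀ i, 0 ≤ u i)
    (h1 : ∀ᶠ i : ℕ in atTop, (i : ℝ) ^ α / 2 ≤ u i + u (i + 1))
    (h2 : ∀ᶠ n : ℕ in atTop, u n ≤ (n : ℝ) ^ α + K) :
    ∀ᶠ n in atTop, σ * u n ≤ κ * ∑ i ∈ Finset.range n, u i := by
  obtain ⟨i₀, hi₀⟩ := eventually_atTop.1 h1
  have hblock : ∀ k ≥ i₀, ∀ L : ℕ, L * ((k : ℝ) ^ α / 2) ≤ ∑ i ∈ Finset.range (k + 2 * L), u i := by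
    intro k hk L
    induction L with
    | zero => simpa using Finset.sum_nonneg fun i _ => hu0 i
    | succ L ih =>
      rw [show k + 2 * (L + 1) = k + 2 * L + 1 + 1 by ring, Finset.sum_range_succ,
        Finset.sum_range_succ]
      have h3 := hi₀ (k + 2 * L) (by omega)
      have h4 : (k : ℝ) ^ α ≤ ((k + 2 * L : ℕ) : ℝ) ^ α :=
        Real.rpow_le_rpow (by positivity) (by push_cast; linarith [Nat.cast_nonneg (α := ℝ) L]) hα.le
      push_cast at *
      linarith
  obtain ⟨L, hL⟩ := exists_nat_ge (2 * 2 ^ α * (σ * (|K| + 1)) / κ)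
  filter_upwards [h2, eventually_ge_atTop 1, eventually_ge_atTop (4 * L),
    eventually_ge_atTop (i₀ + 2 * L)] with n hn hn1 hn4 hni
  obtain ⟨k, rfl⟩ : ∃ k, n = k + 2 * L := ⟨n - 2 * L, by omega⟩
  set n := k + 2 * L with hnk
  have h5 := hblock k (by omega) L
  have hn1' : (1 : ℝ) ≤ n := by exact_mod_cast hn1
  have h6 : (n : ℝ) ^ α ≤ 2 ^ α * (k : ℝ) ^ α := by
    rw [← Real.mul_rpow (by norm_num) (by positivity)]
    refine Real.rpow_le_rpow (by positivity) ?_ hα.le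
    exact_mod_cast (by omega : n ≤ 2 * k)
  have h7 : 1 ≤ (n : ℝ) ^ α := Real.one_le_rpow hn1' hα.le
  rw [div_le_iff₀ hκ] at hL
  have h8 : u n ≤ (|K| + 1) * (n : ℝ) ^ α := by
    have := le_abs_self K
    nlinarith [abs_nonneg K]
  have hk0 : 0 ≤ (k : ℝ) ^ α := by positivity
  calc σ * u n ≤ σ * ((|K| + 1) * (n : ℝ) ^ α) := mul_le_mul_of_nonneg_left h8 hσ
    _ = (σ * (|K| + 1)) * (n : ℝ) ^ α := by ring
    _ ≤ (σ * (|K| + 1)) * (2 ^ α * (k : ℝ) ^ α) :=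
        mul_le_mul_of_nonneg_left h6 (by positivity)
    _ = (2 * 2 ^ α * (σ * (|K| + 1))) * ((k : ℝ) ^ α / 2) := by ring
    _ ≤ (L * κ) * ((k : ℝ) ^ α / 2) := mul_le_mul_of_nonneg_right hL (by positivity)
    _ = κ * (L * ((k : ℝ) ^ α / 2)) := by ring
    _ ≤ _ := mul_le_mul_of_nonneg_left h5 hκ.le

/-- The blocks `⌈bᵢ⌉ + 2 ≤ aᵢ < ⌈bᵢ⌉ + 2 + Nᵢ` with `Nᵢ ≈ bᵢ ^ (1 - ε)` force `aᵢ ~ bᵢ`, while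
`∏_{i≤n} aᵢ ^ (2 s) = O(∏_{i<n} Nᵢ)` as soon as `2 s < 1 - 2 ε`. -/
lemma le_dimH_Ephi {α : ℝ} (hα : 1 / 2 ≤ α) {s : ℝ≥0} (hs0 : 0 < s) (hs : (s : ℝ) < 1 / 2) :
    (s : ℝ≥0∞) ≤ dimH (Ephi (fun n : ℕ => Real.exp ((n : ℝ) ^ α))) := by
  have hα0 : 0 < α := by linarith
  have hs0' : (0 : ℝ) < s := by exact_mod_cast hs0
  set ε : ℝ := (1 - 2 * s) / 4 with hε
  have hε0 : 0 < ε := by linarith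
  have hε1 : ε < 1 / 4 := by linarith
  set b := base α with hb
  have hb0 : ∀ i, 0 < b i := base_pos hα0
  have hbtop : Tendsto b atTop atTop := base_tendsto hα
  set c : ℕ → ℕ := fun i => ⌈b i⌉₊ + 2 with hc
  set N : ℕ → ℕ := fun i => ⌊b i ^ (1 - ε)⌋₊ + 1 with hN
  have hcge : ∀ i, b i ≤ c i := fun i => by
    have := Nat.le_ceil (b i)
    simp only [hc]; push_cast; linarith
  have hcN : ∀ i, ((c i + N i : ℕ) : ℝ) ≤ b i + b i ^ (1 - ε) + 4 := fun i => by
    have h1 := Nat.ceil_lt_add_one (hb0 i).le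
    have h2 := Nat.floor_le (show 0 ≤ b i ^ (1 - ε) by have := hb0 i; positivity)
    simp only [hc, hN]; push_cast; linarith
  have hNge : ∀ i, b i ^ (1 - ε) ≤ N i := fun i => by
    have := Nat.lt_floor_add_one (b i ^ (1 - ε))
    simp only [hN]; push_cast; linarith
  have hN1 : ∀ i, 1 ≤ N i := fun i => Nat.succ_le_succ (Nat.zero_le _)
  have hN1' : ∀ i, (1 : ℝ) ≤ N i := fun i => by exact_mod_cast hN1 i
  have hM1 : ∀ i, (1 : ℝ) ≤ ((c i + N i : ℕ) : ℝ) := fun i => by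
    have := hN1 i; exact_mod_cast (by omega : 1 ≤ c i + N i)
  have hMb : ∀ i, b i ≤ ((c i + N i : ℕ) : ℝ) := fun i => by
    have := hcge i; push_cast; linarith [hN1' i]
  have hlim : Tendsto (fun i => (b i + b i ^ (1 - ε) + 4) / b i) atTop (nhds 1) := by
    have h1 : Tendsto (fun i => b i ^ (-ε)) atTop (nhds 0) :=
      (tendsto_rpow_neg_atTop hε0).comp hbtop
    have h2 : Tendsto (fun i => 4 / b i) atTop (nhds 0) := tendsto_const_nhds.div_atTop hbtop
    have h3 := (h1.add h2).const_add 1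
    rw [add_zero, add_zero] at h3
    refine h3.congr fun i => ?_
    have := hb0 i
    rw [show (1 - ε) = 1 + -ε by ring, Real.rpow_add this, Real.rpow_one]
    field_simp
    ring
  set u : ℕ → ℝ := fun i => Real.log ((c i + N i : ℕ) : ℝ) with hu
  set v : ℕ → ℝ := fun i => Real.log (N i) with hv
  have hu0 : ∀ i, 0 ≤ u i := fun i => Real.log_nonneg (hM1 i)
  have hv0 : ∀ i, 0 ≤ v i := fun i => Real.log_nonneg (hN1' i)
  have huv : ∀ᶠ i in atTop, (1 - 2 * ε) * u i ≤ v i := by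
    have h1 := hlim.eventually_le_const (show (1 : ℝ) < 2 by norm_num)
    have h2 : Tendsto (fun i => ε * Real.log (b i)) atTop atTop :=
      (Real.tendsto_log_atTop.comp hbtop).const_mul_atTop hε0
    filter_upwards [h1, h2.eventually_ge_atTop (Real.log 2)] with i hi1 hi2
    rw [div_le_iff₀ (hb0 i)] at hi1
    have h3 : u i ≤ Real.log 2 + Real.log (b i) := by
      rw [← Real.log_mul (by norm_num) (hb0 i).ne']
      exact Real.log_le_log (by linarith [hM1 i]) ((hcN i).trans hi1)
    have h4 : (1 - ε) * Real.log (b i) ≤ v i := by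
      rw [← Real.log_rpow (hb0 i)]
      exact Real.log_le_log (by have := hb0 i; positivity) (hNge i)
    have h5 : 0 ≤ Real.log 2 := Real.log_nonneg (by norm_num)
    nlinarith
  have hpair : ∀ᶠ i : ℕ in atTop, (i : ℝ) ^ α / 2 ≤ u i + u (i + 1) := by
    filter_upwards [incr_ge hα] with i hi
    rw [← Real.log_mul (by linarith [hM1 i]) (by linarith [hM1 (i + 1)]),
      Real.le_log_iff_exp_le (mul_pos (by linarith [hM1 i]) (by linarith [hM1 (i + 1)]))]
    refine hi.trans ?_
    rw [← base_mul hα0]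
    exact mul_le_mul (hMb i) (hMb (i + 1)) (hb0 _).le (by linarith [hM1 i])
  obtain ⟨κ, hκ0, hκ⟩ := exists_base_ge hα
  have hupper : ∀ᶠ n : ℕ in atTop, u n ≤ (n : ℝ) ^ α + Real.log (2 / κ) := by
    have h1 := hlim.eventually_le_const (show (1 : ℝ) < 2 by norm_num)
    filter_upwards [h1, eventually_ge_atTop 1] with n hn hn1
    rw [div_le_iff₀ (hb0 n)] at hn
    obtain ⟨m, rfl⟩ : ∃ m, n = m + 1 := ⟨n - 1, by omega⟩
    have h2 : b (m + 1) * κ ≤ Real.exp (((m + 1 : ℕ) : ℝ) ^ α) := by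
      have h3 : incr α m ≤ Real.exp (((m + 1 : ℕ) : ℝ) ^ α) := by
        rw [incr]; linarith [Real.exp_pos ((m : ℝ) ^ α)]
      rw [← base_mul hα0] at h3
      refine le_trans ?_ h3
      rw [mul_comm]
      refine mul_le_mul_of_nonneg_right ?_ (hb0 _).le
      have := hκ m
      nlinarith [Nat.cast_nonneg (α := ℝ) m]
    have h3 : ((c (m + 1) + N (m + 1) : ℕ) : ℝ) ≤ Real.exp (((m + 1 : ℕ) : ℝ) ^ α) * (2 / κ) := by
      refine ((hcN _).trans hn).trans ?_
      rw [mul_div_assoc', le_div_iff₀ hκ0]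
      linarith
    have h4 := Real.log_le_log (by linarith [hM1 (m + 1)]) h3
    rwa [Real.log_mul (Real.exp_pos _).ne' (by positivity), Real.log_exp] at h4
  have hneg := negligible (σ := 2 * (s : ℝ)) (κ := (1 - 2 * ε) - 2 * s) hα0 (by positivity)
    (by rw [hε]; linarith) hu0 hpair hupper
  obtain ⟨A, hA⟩ := bddAbove_sum hv0 huv hneg
  refine le_dimH_of_blocks (c := c) (N := N) (fun i => Nat.le_add_left _ _) hN1 hs0
    (C := Real.exp A) (fun n => ?_) (fun a ha => ?_)
  · have h1 : 2 * (s : ℝ) * ∑ i ∈ Finset.range (n + 1), u i - ∑ i ∈ Finset.range n, v i ≤ A :=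
      hA ⟨n, rfl⟩
    have e1 : ∏ i ∈ Finset.range (n + 1), ((c i + N i : ℕ) : ℝ) ^ (2 * (s : ℝ))
        = Real.exp (2 * (s : ℝ) * ∑ i ∈ Finset.range (n + 1), u i) := by
      rw [Finset.mul_sum, Real.exp_sum]
      refine Finset.prod_congr rfl fun i _ => ?_
      rw [Real.rpow_def_of_pos (by linarith [hM1 i]), mul_comm]
    have e2 : ∏ i ∈ Finset.range n, (N i : ℝ) = Real.exp (∑ i ∈ Finset.range n, v i) := by
      rw [Real.exp_sum]
      refine Finset.prod_congr rfl fun i _ => ?_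
      rw [Real.exp_log (by linarith [hN1' i])]
    rw [e1, e2, ← Real.exp_add, Real.exp_le_exp]
    linarith
  · refine cfVal_mem_Ephi hα0 (fun i => (Nat.le_add_left 2 _).trans (ha i).1) ?_
    refine tendsto_of_tendsto_of_tendsto_of_le_of_le tendsto_const_nhds hlim (fun i => ?_)
      (fun i => ?_)
    · rw [le_div_iff₀ (hb0 i), one_mul]
      exact (hcge i).trans (by exact_mod_cast (ha i).1)
    · refine div_le_div_of_nonneg_right ?_ (hb0 i).le
      refine le_trans ?_ (hcN i)
      exact Nat.cast_le.2 (ha i).2.le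

theorem dimH_Ephi_subexponential (α : ℝ) (hα : 1 / 2 ≤ α) :
    dimH (Ephi (fun n : ℕ => Real.exp ((n : ℝ) ^ α))) = 1 / 2 := by
  refine le_antisymm (dimH_le_half hα) (le_of_forall_lt fun c hc => ?_)
  obtain ⟨s, hs1, hs2⟩ := ENNReal.lt_iff_exists_nnreal_btwn.1 hc
  have hs : (s : ℝ) < 1 / 2 := by
    have : (s : ℝ≥0∞) < ((1 / 2 : ℝ≥0) : ℝ≥0∞) := by
      rw [ENNReal.coe_div two_ne_zero]; simpa using hs2
    exact_mod_cast (ENNReal.coe_lt_coe.1 this)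
  have hs0 : 0 < s := ENNReal.coe_pos.1 (lt_of_le_of_lt zero_le hs1)
  exact hs1.trans_le (le_dimH_Ephi hα hs0 hs)
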